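/- arXiv:1908.06794 — 2 statements merged into one kernel-verified Lean document; each statement's English description precedes it below -/
import Mathlib

section
/- Let n ≥ 1, let k be an integer with 1 < k ≤ n, and let a ∈ ℝ^{n+1} with |a| > 1. For a function f : S^n → ℝ the following are equivalent: (i) (M_{a*} f)(y) = (M_{a*} f)(R_a y) for all y ∈ S^n; (ii) f(x) = ρ_{a*}(x) f(τ_a x) for all x ∈ S^n. Here (M_{a*} f)(y) = ( s_{a*}/(1 − a*·y) )^{k−1} f(φ_{a*} y), ρ_{a*}(x) = ( (|a|² − 1)/|a − x|² )^{k−1}, and τ_a x = ((|a|² − 1) x + 2(1 − x·a) a)/|x − a|². -/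
open MeasureTheory Metric Matrix
open scoped InnerProductSpace ENNReal

/-- `Euc m` is the Euclidean space `ℝ^m`. -/
abbrev Euc (m : ℕ) : Type := EuclideanSpace ℝ (Fin m)

/-- The Möbius transformation `φ_b x = (b − P_b x − s_b Q_b x)/(1 − x·b)`,
where `P_b x = ((b·x)/|b|²) b`, `Q_b x = x − P_b x`, `s_b = √(1 − |b|²)`. -/
noncomputable def phiMap {n : ℕ} (b x : Euc (n + 1)) : Euc (n + 1) :=
  (1 - ⟪x, b⟫_ℝ)⁻¹ •
    (b - (⟪b, x⟫_ℝ / ‖b‖ ^ 2) • b -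
      Real.sqrt (1 - ‖b‖ ^ 2) • (x - (⟪b, x⟫_ℝ / ‖b‖ ^ 2) • b))

/-- `a* = a/|a|²`, the inversion of `a` in the unit sphere. -/
noncomputable def aStar {n : ℕ} (a : Euc (n + 1)) : Euc (n + 1) := (‖a‖ ^ 2)⁻¹ • a

/-- `s_{a*} = √(1 − |a*|²)`. -/
noncomputable def sStar {n : ℕ} (a : Euc (n + 1)) : ℝ := Real.sqrt (1 - ‖aStar a‖ ^ 2)

/-- The reflection `R_a x = x − 2((x·a)/|a|²) a` in the hyperplane `a^⊥`. -/
noncomputable def reflMap {n : ℕ} (a x : Euc (n + 1)) : Euc (n + 1) :=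
  x - ((2 * ⟪x, a⟫_ℝ) / ‖a‖ ^ 2) • a

/-- `τ_a x = ((|a|² − 1) x + 2(1 − x·a) a)/|x − a|²`, the second point at which the
line through `a` and `x` meets the unit sphere. -/
noncomputable def tauMap {n : ℕ} (a x : Euc (n + 1)) : Euc (n + 1) :=
  (‖x - a‖ ^ 2)⁻¹ • ((‖a‖ ^ 2 - 1) • x + (2 * (1 - ⟪x, a⟫_ℝ)) • a)

lemma aux_inner_lt {n : ℕ} {a y : Euc (n + 1)} (ha : 1 < ‖a‖) (hy : ‖y‖ = 1) :
    0 < ‖a‖ ^ 2 - ⟪y, a⟫_ℝ ∧ 0 < ‖a‖ ^ 2 + ⟪y, a⟫_ℝ := by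
  have h := abs_real_inner_le_norm y a
  rw [hy, one_mul, abs_le] at h
  constructor <;> nlinarith

lemma aux_sStar_sq {n : ℕ} {a : Euc (n + 1)} (ha : 1 < ‖a‖) :
    0 < sStar a ∧ ‖a‖ ^ 2 * sStar a ^ 2 = ‖a‖ ^ 2 - 1 := by
  have hA : 1 < ‖a‖ ^ 2 := by nlinarith
  have hn : ‖aStar a‖ ^ 2 = (‖a‖ ^ 2)⁻¹ := by
    rw [aStar, norm_smul, mul_pow, Real.norm_eq_abs, sq_abs]
    field_simp
  have h1 : (‖a‖ ^ 2)⁻¹ < 1 := inv_lt_one_of_one_lt₀ hA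
  have h0 : 0 < 1 - ‖aStar a‖ ^ 2 := by rw [hn]; linarith
  refine ⟨Real.sqrt_pos.2 h0, ?_⟩
  rw [sStar, Real.sq_sqrt h0.le, hn]
  field_simp

lemma aux_phi {n : ℕ} {a y : Euc (n + 1)} (ha : 1 < ‖a‖) (hy : ‖y‖ = 1) :
    phiMap (aStar a) y = (‖a‖ ^ 2 - ⟪y, a⟫_ℝ)⁻¹ •
      ((1 - ⟪y, a⟫_ℝ + sStar a * ⟪y, a⟫_ℝ) • a - (sStar a * ‖a‖ ^ 2) • y) := by
  have hA : 1 < ‖a‖ ^ 2 := by nlinarith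
  have hn : ‖aStar a‖ ^ 2 = (‖a‖ ^ 2)⁻¹ := by
    rw [aStar, norm_smul, mul_pow, Real.norm_eq_abs, sq_abs]
    field_simp
  have ht := (aux_inner_lt ha hy).1
  have hs : Real.sqrt (1 - ‖aStar a‖ ^ 2) = sStar a := rfl
  rw [phiMap, hs, hn, aStar, real_inner_smul_right, real_inner_smul_left, real_inner_comm]
  generalize sStar a = s
  rw [real_inner_comm] at ht ⊢
  generalize ⟪y, a⟫_ℝ = t at *
  generalize ‖a‖ ^ 2 = A at *
  have hA0 : A ≠ 0 := by linarith
  have e : 1 - A⁻¹ * t = (A - t) / A := by field_simp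
  rw [e]
  have ht0 := ht.ne'
  match_scalars <;> field_simp
  ring

lemma aux_phi_inner {n : ℕ} {a y : Euc (n + 1)} (ha : 1 < ‖a‖) (hy : ‖y‖ = 1) :
    ⟪phiMap (aStar a) y, a⟫_ℝ = ‖a‖ ^ 2 * (1 - ⟪y, a⟫_ℝ) / (‖a‖ ^ 2 - ⟪y, a⟫_ℝ) := by
  have ht0 := (aux_inner_lt ha hy).1.ne'
  rw [aux_phi ha hy, real_inner_smul_left, inner_sub_left, real_inner_smul_left,
    real_inner_smul_left, real_inner_self_eq_norm_sq]
  field_simp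
  ring

lemma aux_phi_norm {n : ℕ} {a y : Euc (n + 1)} (ha : 1 < ‖a‖) (hy : ‖y‖ = 1) :
    ‖phiMap (aStar a) y‖ = 1 := by
  have ht0 := (aux_inner_lt ha hy).1.ne'
  have hs := (aux_sStar_sq ha).2
  have : ‖phiMap (aStar a) y‖ ^ 2 = 1 := by
    rw [aux_phi ha hy, norm_smul, mul_pow, Real.norm_eq_abs, sq_abs, norm_sub_sq_real,
      norm_smul, norm_smul, mul_pow, mul_pow, Real.norm_eq_abs, sq_abs, Real.norm_eq_abs, sq_abs,
      hy, real_inner_smul_left, real_inner_smul_right, real_inner_comm y a]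
    generalize sStar a = s at *
    generalize ⟪y, a⟫_ℝ = t at *
    generalize ‖a‖ ^ 2 = A at *
    field_simp
    linear_combination (A - t ^ 2) * hs
  nlinarith [norm_nonneg (phiMap (aStar a) y)]

lemma aux_phi_phi {n : ℕ} {a y : Euc (n + 1)} (ha : 1 < ‖a‖) (hy : ‖y‖ = 1) :
    phiMap (aStar a) (phiMap (aStar a) y) = y := by
  have hA : 1 < ‖a‖ ^ 2 := by nlinarith
  have ht := (aux_inner_lt ha hy).1
  have hs := (aux_sStar_sq ha).2
  rw [aux_phi ha (aux_phi_norm ha hy), aux_phi_inner ha hy, aux_phi ha hy]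
  generalize sStar a = s at *
  generalize ⟪y, a⟫_ℝ = t at *
  generalize ‖a‖ ^ 2 = A at *
  have hA0 : A ≠ 0 := by linarith
  have hA1 : A - 1 ≠ 0 := by linarith
  have ht0 := ht.ne'
  have e : A - A * (1 - t) / (A - t) = A * (A - 1) / (A - t) := by field_simp; ring
  rw [e]
  match_scalars
  · field_simp
    linear_combination (-t) * hs
  · field_simp
    linear_combination hs

lemma aux_refl_norm {n : ℕ} {a y : Euc (n + 1)} (ha : 1 < ‖a‖) (hy : ‖y‖ = 1) :
    ‖reflMap a y‖ = 1 := by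
  have hA0 : ‖a‖ ≠ 0 := by linarith
  have : ‖reflMap a y‖ ^ 2 = 1 := by
    rw [reflMap, norm_sub_sq_real, norm_smul, mul_pow, Real.norm_eq_abs, sq_abs, hy,
      real_inner_smul_right]
    field_simp
    ring
  nlinarith [norm_nonneg (reflMap a y)]

lemma aux_refl_inner {n : ℕ} {a y : Euc (n + 1)} (ha : 1 < ‖a‖) :
    ⟪reflMap a y, a⟫_ℝ = - ⟪y, a⟫_ℝ := by
  have hA0 : ‖a‖ ≠ 0 := by linarith
  rw [reflMap, inner_sub_left, real_inner_smul_left, real_inner_self_eq_norm_sq]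
  field_simp
  ring

lemma aux_dist {n : ℕ} {a y : Euc (n + 1)} (ha : 1 < ‖a‖) (hy : ‖y‖ = 1) :
    ‖phiMap (aStar a) y - a‖ ^ 2 =
      (‖a‖ ^ 2 - 1) * (‖a‖ ^ 2 + ⟪y, a⟫_ℝ) / (‖a‖ ^ 2 - ⟪y, a⟫_ℝ) := by
  have ht0 := (aux_inner_lt ha hy).1.ne'
  rw [norm_sub_sq_real, aux_phi_norm ha hy, aux_phi_inner ha hy]
  field_simp
  ring

lemma aux_tau {n : ℕ} {a y : Euc (n + 1)} (ha : 1 < ‖a‖) (hy : ‖y‖ = 1) :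
    tauMap a (phiMap (aStar a) y) = phiMap (aStar a) (reflMap a y) := by
  have hA : 1 < ‖a‖ ^ 2 := by nlinarith
  obtain ⟨ht, ht'⟩ := aux_inner_lt ha hy
  rw [tauMap, aux_dist ha hy, aux_phi_inner ha hy, aux_phi ha hy,
    aux_phi ha (aux_refl_norm ha hy), aux_refl_inner ha, reflMap]
  generalize sStar a = s at *
  generalize ⟪y, a⟫_ℝ = t at *
  generalize ‖a‖ ^ 2 = A at *
  have hA0 : A ≠ 0 := by linarith
  have hA1 : A - 1 ≠ 0 := by linarith
  have ht0 := ht.ne'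
  have ht1 := ht'.ne'
  rw [sub_neg_eq_add]
  match_scalars <;> field_simp
  ring

lemma aux_iff {n : ℕ} (m : ℕ) {a y : Euc (n + 1)} (ha : 1 < ‖a‖) (hy : ‖y‖ = 1)
    (f : Euc (n + 1) → ℝ) :
    ((sStar a / (1 - ⟪aStar a, y⟫_ℝ)) ^ m * f (phiMap (aStar a) y) =
          (sStar a / (1 - ⟪aStar a, reflMap a y⟫_ℝ)) ^ m *
            f (phiMap (aStar a) (reflMap a y))) ↔
      f (phiMap (aStar a) y) = ((‖a‖ ^ 2 - 1) / ‖a - phiMap (aStar a) y‖ ^ 2) ^ m *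
        f (tauMap a (phiMap (aStar a) y)) := by
  have hA : 1 < ‖a‖ ^ 2 := by nlinarith
  obtain ⟨ht, ht'⟩ := aux_inner_lt ha hy
  have hs := (aux_sStar_sq ha).1
  rw [aux_tau ha hy, norm_sub_rev a, aux_dist ha hy, aStar, real_inner_smul_left,
    real_inner_smul_left, real_inner_comm _ a, real_inner_comm _ a, aux_refl_inner ha]
  generalize f _ = u
  generalize f _ = v
  generalize sStar a = s at *
  generalize ⟪y, a⟫_ℝ = t at *
  generalize ‖a‖ ^ 2 = A at *
  have hA0 : 0 < A := by linarith
  have hA1 : A - 1 ≠ 0 := by linarith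
  have ht0 := ht.ne'
  have ht1 := ht'.ne'
  have e1 : 1 - A⁻¹ * t = (A - t) / A := by field_simp
  have e2 : 1 - A⁻¹ * -t = (A + t) / A := by field_simp; ring
  have e3 : s / ((A + t) / A) =
      s / ((A - t) / A) * ((A - 1) / ((A - 1) * (A + t) / (A - t))) := by
    field_simp
  have hp : (s / ((A - t) / A)) ^ m ≠ 0 := by positivity
  rw [e1, e2, e3, mul_pow, mul_assoc]
  exact mul_right_inj' hp

/-- Equivalence of the symmetry conditions (5.5) and (5.9): for
`f : S^n → ℝ`, one has `(M_{a*}f)(y) = (M_{a*}f)(R_a y)` for all `y ∈ S^n` iff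
`f(x) = ρ_{a*}(x) f(τ_a x)` for all `x ∈ S^n`, where
`(M_{a*}f)(y) = (s_{a*}/(1 − a*·y))^{k−1} f(φ_{a*} y)` and
`ρ_{a*}(x) = ((|a|² − 1)/|a − x|²)^{k−1}`. -/
theorem statement18 (n k : ℕ) (hn : 1 ≤ n) (hk : 1 < k) (hkn : k ≤ n)
    (a : Euc (n + 1)) (ha : 1 < ‖a‖)
    (f : Euc (n + 1) → ℝ) :
    (∀ y ∈ sphere (0 : Euc (n + 1)) 1,
        (sStar a / (1 - ⟪aStar a, y⟫_ℝ)) ^ (k - 1) * f (phiMap (aStar a) y) =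
          (sStar a / (1 - ⟪aStar a, reflMap a y⟫_ℝ)) ^ (k - 1) *
            f (phiMap (aStar a) (reflMap a y))) ↔
      ∀ x ∈ sphere (0 : Euc (n + 1)) 1,
        f x = ((‖a‖ ^ 2 - 1) / ‖a - x‖ ^ 2) ^ (k - 1) * f (tauMap a x) := by
  constructor
  · intro h x hx
    have hx1 : ‖x‖ = 1 := by simpa using hx
    have hy := aux_phi_norm ha hx1
    have := (aux_iff (k - 1) ha hy f).1 (h _ (by simpa using hy))
    rwa [aux_phi_phi ha hx1] at this
  · intro h y hy
    have hy1 : ‖y‖ = 1 := by simpa using hy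
    exact (aux_iff (k - 1) ha hy1 f).2 (h _ (by simpa using aux_phi_norm ha hy1))
end

section
/- Let n ≥ 1 and let b ∈ ℝ^{n+1} with 0 < |b| < 1. Then for every function f integrable on S^n with respect to the n-dimensional Hausdorff measure, ∫_{S^n} f(x) dH^n(x) = (1 − |b|²)^{n/2} ∫_{S^n} f(φ_b y) / (1 − b·y)^n dH^n(y). -/
open MeasureTheory Metric Matrix
open scoped InnerProductSpace ENNReal

section Helpers

variable {n : ℕ}

/-- The quantity `s_b`. -/
noncomputable def sAux (b : Euc (n + 1)) : ℝ := Real.sqrt (1 - ‖b‖ ^ 2)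

/-- The conformal factor `s_b / (1 - x·b)`. -/
noncomputable def wAux (b x : Euc (n + 1)) : ℝ := sAux b / (1 - ⟪x, b⟫_ℝ)

lemma sAux_pos {b : Euc (n + 1)} (hb1 : ‖b‖ < 1) : 0 < sAux b := by
  unfold sAux
  apply Real.sqrt_pos.2
  nlinarith [norm_nonneg b]

lemma sAux_sq {b : Euc (n + 1)} (hb1 : ‖b‖ < 1) : ‖b‖ ^ 2 = 1 - sAux b ^ 2 := by
  unfold sAux
  rw [Real.sq_sqrt]
  · ring
  · nlinarith [norm_nonneg b]

lemma one_sub_pos {b x : Euc (n + 1)} (hb1 : ‖b‖ < 1) (hx : ‖x‖ = 1) : 0 < 1 - ⟪x, b⟫_ℝ := by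
  have := real_inner_le_norm x b
  rw [hx, one_mul] at this
  linarith

lemma wAux_pos {b x : Euc (n + 1)} (hb1 : ‖b‖ < 1) (hx : ‖x‖ = 1) : 0 < wAux b x :=
  div_pos (sAux_pos hb1) (one_sub_pos hb1 hx)

lemma phiMap_eq {b : Euc (n + 1)} (hb0 : 0 < ‖b‖) (hb1 : ‖b‖ < 1) (x : Euc (n + 1)) :
    phiMap b x = (1 - ⟪x, b⟫_ℝ)⁻¹ •
      ((1 - ⟪x, b⟫_ℝ / (1 + sAux b)) • b - sAux b • x) := by
  have hs := sAux_pos hb1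
  have hN := sAux_sq hb1
  have hN0 : (0 : ℝ) < ‖b‖ ^ 2 := by positivity
  unfold phiMap
  rw [show Real.sqrt (1 - ‖b‖ ^ 2) = sAux b from rfl, real_inner_comm x b]
  congr 1
  have h : 1 - ⟪x, b⟫_ℝ / (1 + sAux b) =
      1 - ⟪x, b⟫_ℝ / ‖b‖ ^ 2 + sAux b * (⟪x, b⟫_ℝ / ‖b‖ ^ 2) := by
    have h1 : 1 + sAux b ≠ 0 := by positivity
    have h2 : ‖b‖ ^ 2 ≠ 0 := hN0.ne'
    field_simp
    rw [hN]; ring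
  rw [h]
  module

lemma inner_phiMap {b x y : Euc (n + 1)} (hb0 : 0 < ‖b‖) (hb1 : ‖b‖ < 1)
    (hx : ‖x‖ = 1) (hy : ‖y‖ = 1) :
    ⟪phiMap b x, phiMap b y⟫_ℝ = 1 - wAux b x * wAux b y * (1 - ⟪x, y⟫_ℝ) := by
  have hs := sAux_pos hb1
  have hN := sAux_sq hb1
  have hu := (one_sub_pos hb1 hx).ne'
  have hv := (one_sub_pos hb1 hy).ne'
  have h1 : 1 + sAux b ≠ 0 := by positivity
  rw [phiMap_eq hb0 hb1, phiMap_eq hb0 hb1]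
  unfold wAux
  simp only [inner_smul_left, inner_smul_right, inner_sub_left, inner_sub_right,
    real_inner_self_eq_norm_sq, hN, real_inner_comm y b, conj_trivial]
  field_simp
  ring

lemma inner_phiMap_b {b x : Euc (n + 1)} (hb0 : 0 < ‖b‖) (hb1 : ‖b‖ < 1) (hx : ‖x‖ = 1) :
    1 - ⟪phiMap b x, b⟫_ℝ = sAux b ^ 2 / (1 - ⟪x, b⟫_ℝ) := by
  have hs := sAux_pos hb1
  have hN := sAux_sq hb1
  have hu := (one_sub_pos hb1 hx).ne'
  have h1 : 1 + sAux b ≠ 0 := by positivity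
  rw [phiMap_eq hb0 hb1]
  simp only [inner_smul_left, inner_sub_left,
    real_inner_self_eq_norm_sq, hN, conj_trivial]
  field_simp
  ring

lemma norm_phiMap {b x : Euc (n + 1)} (hb0 : 0 < ‖b‖) (hb1 : ‖b‖ < 1) (hx : ‖x‖ = 1) :
    ‖phiMap b x‖ = 1 := by
  have h := inner_phiMap hb0 hb1 hx hx
  rw [real_inner_self_eq_norm_sq, real_inner_self_eq_norm_sq, hx] at h
  have h2 : ‖phiMap b x‖ ^ 2 = 1 := by rw [h]; ring
  nlinarith [norm_nonneg (phiMap b x)]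

lemma wAux_phiMap {b x : Euc (n + 1)} (hb0 : 0 < ‖b‖) (hb1 : ‖b‖ < 1) (hx : ‖x‖ = 1) :
    wAux b (phiMap b x) = (wAux b x)⁻¹ := by
  have hs := (sAux_pos hb1).ne'
  have hu := (one_sub_pos hb1 hx).ne'
  unfold wAux
  rw [inner_phiMap_b hb0 hb1 hx]
  field_simp

lemma phiMap_phiMap {b x : Euc (n + 1)} (hb0 : 0 < ‖b‖) (hb1 : ‖b‖ < 1) (hx : ‖x‖ = 1) :
    phiMap b (phiMap b x) = x := by
  have hs := (sAux_pos hb1)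
  have hu := (one_sub_pos hb1 hx).ne'
  have h1 : 1 + sAux b ≠ 0 := by positivity
  have hi := inner_phiMap_b hb0 hb1 hx
  have hi2 : ⟪phiMap b x, b⟫_ℝ = 1 - sAux b ^ 2 / (1 - ⟪x, b⟫_ℝ) := by linarith
  rw [phiMap_eq hb0 hb1 (phiMap b x), hi, hi2, phiMap_eq hb0 hb1 x]
  have hc : (1 - (1 - sAux b ^ 2 / (1 - ⟪x, b⟫_ℝ)) / (1 + sAux b)) =
      sAux b * ((1 - ⟪x, b⟫_ℝ)⁻¹ * (1 - ⟪x, b⟫_ℝ / (1 + sAux b))) := by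
    field_simp
    ring
  have hd : (sAux b ^ 2 / (1 - ⟪x, b⟫_ℝ))⁻¹ * (sAux b * ((1 - ⟪x, b⟫_ℝ)⁻¹ * sAux b)) = 1 := by
    field_simp
  rw [hc]
  generalize (1 - ⟪x, b⟫_ℝ / (1 + sAux b)) = α at *
  generalize (sAux b ^ 2 / (1 - ⟪x, b⟫_ℝ))⁻¹ = β at *
  generalize (1 - ⟪x, b⟫_ℝ)⁻¹ = γ at *
  calc _ = (β * (sAux b * (γ * sAux b))) • x := by module
    _ = x := by rw [hd, one_smul]

lemma dist_phiMap {b x y : Euc (n + 1)} (hb0 : 0 < ‖b‖) (hb1 : ‖b‖ < 1)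
    (hx : ‖x‖ = 1) (hy : ‖y‖ = 1) :
    dist (phiMap b x) (phiMap b y) ^ 2 = wAux b x * wAux b y * dist x y ^ 2 := by
  rw [dist_eq_norm, dist_eq_norm, norm_sub_sq_real, norm_sub_sq_real, inner_phiMap hb0 hb1 hx hy,
    norm_phiMap hb0 hb1 hx, norm_phiMap hb0 hb1 hy, hx, hy]
  ring

lemma measurable_phiMap (b : Euc (n + 1)) : Measurable (phiMap b) := by
  unfold phiMap
  fun_prop

lemma measurable_wAux (b : Euc (n + 1)) : Measurable (wAux b) := by
  unfold wAux
  fun_prop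

lemma hausdorff_piece {b : Euc (n + 1)} (hb0 : 0 < ‖b‖) (hb1 : ‖b‖ < 1)
    {A : Set (Euc (n + 1))} (hA : MeasurableSet A) (hAS : A ⊆ sphere 0 1)
    {c r : ℝ} (hc : 0 < c) (hr : 0 < r) (h1 : ∀ x ∈ A, c ≤ wAux b x)
    (h2 : ∀ x ∈ A, wAux b x ≤ c * r) :
    μH[(n : ℝ)] (phiMap b '' A) ≤
      ENNReal.ofReal (r ^ n) * ∫⁻ x in A, ENNReal.ofReal (wAux b x ^ n) ∂μH[(n : ℝ)] := by
  have hL : LipschitzOnWith (c * r).toNNReal (phiMap b) A := by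
    apply LipschitzOnWith.of_dist_le_mul
    intro x hx y hy
    have hx1 : ‖x‖ = 1 := by simpa using hAS hx
    have hy1 : ‖y‖ = 1 := by simpa using hAS hy
    rw [Real.coe_toNNReal _ (by positivity)]
    refine (sq_le_sq₀ dist_nonneg (by positivity)).1 ?_
    rw [dist_phiMap hb0 hb1 hx1 hy1, mul_pow]
    gcongr
    rw [sq]
    exact mul_le_mul (h2 x hx) (h2 y hy) (wAux_pos hb1 hy1).le (by positivity)
  refine (hL.hausdorffMeasure_image_le (Nat.cast_nonneg n)).trans ?_
  calc _ = ENNReal.ofReal (r ^ n) * (ENNReal.ofReal (c ^ n) * μH[(n : ℝ)] A) := by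
        rw [← mul_assoc, ← ENNReal.ofReal_mul (by positivity), ENNReal.rpow_natCast, ← mul_pow,
          mul_comm r c, ENNReal.ofReal_pow (by positivity)]
        rfl
    _ ≤ _ := by
        gcongr
        rw [← setLIntegral_const]
        apply setLIntegral_mono' hA
        intro x hx
        gcongr
        exact h1 x hx

lemma hausdorff_image {b : Euc (n + 1)} (hb0 : 0 < ‖b‖) (hb1 : ‖b‖ < 1)
    {A : Set (Euc (n + 1))} (hA : MeasurableSet A) (hAS : A ⊆ sphere 0 1) :
    μH[(n : ℝ)] (phiMap b '' A) ≤
      ∫⁻ x in A, ENNReal.ofReal (wAux b x ^ n) ∂μH[(n : ℝ)] := by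
  have key : ∀ r : ℝ, 1 < r → μH[(n : ℝ)] (phiMap b '' A) ≤
      ENNReal.ofReal (r ^ n) * ∫⁻ x in A, ENNReal.ofReal (wAux b x ^ n) ∂μH[(n : ℝ)] := by
    intro r hr
    have hr0 : 0 < r := by linarith
    set B : ℤ → Set (Euc (n + 1)) := fun k => A ∩ wAux b ⁻¹' (Set.Ico (r ^ k) (r ^ (k + 1))) with hB
    have hBm : ∀ k, MeasurableSet (B k) := fun k => hA.inter (measurable_wAux b measurableSet_Ico)
    have hU : A = ⋃ k, B k := by
      ext x
      simp only [hB, Set.mem_iUnion, Set.mem_inter_iff, Set.mem_preimage, exists_and_left]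
      refine ⟨fun hx => ⟨hx, ?_⟩, fun hx => hx.1⟩
      exact exists_mem_Ico_zpow (wAux_pos hb1 (by simpa using hAS hx)) hr
    have hD : Pairwise (Function.onFun Disjoint B) := by
      intro i j hij
      apply Disjoint.mono Set.inter_subset_right Set.inter_subset_right
      apply Disjoint.preimage
      exact (zpow_right_mono₀ hr.le).pairwise_disjoint_on_Ico_succ hij
    calc μH[(n : ℝ)] (phiMap b '' A) = μH[(n : ℝ)] (⋃ k, phiMap b '' B k) := by
          rw [← Set.image_iUnion, ← hU]
      _ ≤ ∑' k, μH[(n : ℝ)] (phiMap b '' B k) := measure_iUnion_le _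
      _ ≤ ∑' k, ENNReal.ofReal (r ^ n) *
            ∫⁻ x in B k, ENNReal.ofReal (wAux b x ^ n) ∂μH[(n : ℝ)] := by
          apply ENNReal.tsum_le_tsum
          intro k
          apply hausdorff_piece hb0 hb1 (hBm k) (Set.inter_subset_left.trans hAS)
            (c := r ^ k) (by positivity) hr0
          · intro x hx
            exact hx.2.1
          · intro x hx
            rw [← zpow_add_one₀ hr0.ne']
            exact hx.2.2.le
      _ = _ := by
          rw [ENNReal.tsum_mul_left, ← lintegral_iUnion hBm hD, ← hU]
  have ht : Filter.Tendsto (fun r : ℝ => ENNReal.ofReal (r ^ n) *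
      ∫⁻ x in A, ENNReal.ofReal (wAux b x ^ n) ∂μH[(n : ℝ)]) (nhdsWithin 1 (Set.Ioi 1))
      (nhds (ENNReal.ofReal (1 ^ n) *
        ∫⁻ x in A, ENNReal.ofReal (wAux b x ^ n) ∂μH[(n : ℝ)])) := by
    apply ENNReal.Tendsto.mul_const
    · apply Filter.Tendsto.mono_left _ nhdsWithin_le_nhds
      apply ENNReal.tendsto_ofReal
      exact (continuous_pow n).tendsto 1
    · left; simp
  have := ge_of_tendsto ht (Filter.eventually_of_mem self_mem_nhdsWithin key)
  simpa using this

/-- Hausdorff measure on the sphere. -/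
noncomputable def muS (n : ℕ) : Measure (Euc (n + 1)) := μH[(n : ℝ)].restrict (sphere 0 1)

/-- The density. -/
noncomputable def WAux (b x : Euc (n + 1)) : ℝ≥0∞ := ENNReal.ofReal (wAux b x ^ n)

lemma measurable_WAux (b : Euc (n + 1)) : Measurable (WAux b) :=
  ((measurable_wAux b).pow_const n).ennreal_ofReal

lemma measurableSet_S : MeasurableSet (sphere (0 : Euc (n + 1)) 1) :=
  Metric.isClosed_sphere.measurableSet

lemma map_le {b : Euc (n + 1)} (hb0 : 0 < ‖b‖) (hb1 : ‖b‖ < 1) :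
    (muS n).map (phiMap b) ≤ (muS n).withDensity (WAux b) := by
  refine Measure.le_iff.2 fun E hE => ?_
  rw [Measure.map_apply (measurable_phiMap b) hE, withDensity_apply _ hE]
  unfold muS
  rw [Measure.restrict_apply (measurable_phiMap b hE), Measure.restrict_restrict hE]
  have h : phiMap b ⁻¹' E ∩ sphere 0 1 ⊆ phiMap b '' (E ∩ sphere 0 1) := by
    rintro x ⟨hx, hxS⟩
    have hx1 : ‖x‖ = 1 := by simpa using hxS
    exact ⟨phiMap b x, ⟨hx, by simpa using norm_phiMap hb0 hb1 hx1⟩, phiMap_phiMap hb0 hb1 hx1⟩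
  exact (measure_mono h).trans
    (hausdorff_image hb0 hb1 (hE.inter measurableSet_S) Set.inter_subset_right)

lemma lintegral_comp_le {b : Euc (n + 1)} (hb0 : 0 < ‖b‖) (hb1 : ‖b‖ < 1)
    {g : Euc (n + 1) → ℝ≥0∞} (hg : Measurable g) :
    ∫⁻ x, g (phiMap b x) ∂(muS n) ≤ ∫⁻ x, WAux b x * g x ∂(muS n) := by
  rw [← lintegral_map hg (measurable_phiMap b)]
  refine (lintegral_mono' (map_le hb0 hb1) le_rfl).trans ?_
  rw [lintegral_withDensity_eq_lintegral_mul _ (measurable_WAux b) hg]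
  rfl

lemma ae_norm_one : ∀ᵐ x ∂(muS n), ‖x‖ = 1 := by
  unfold muS
  filter_upwards [ae_restrict_mem measurableSet_S] with x hx
  simpa using hx

lemma muS_eq_map {b : Euc (n + 1)} (hb0 : 0 < ‖b‖) (hb1 : ‖b‖ < 1) :
    ((muS n).withDensity (WAux b)).map (phiMap b) = muS n := by
  ext E hE
  have hφ := measurable_phiMap b
  have hW := measurable_WAux b
  have hi : Measurable (E.indicator (1 : Euc (n + 1) → ℝ≥0∞)) := measurable_one.indicator hE
  rw [Measure.map_apply hφ hE, withDensity_apply _ (hφ hE), ← lintegral_indicator (hφ hE)]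
  have e1 : ∫⁻ x, (phiMap b ⁻¹' E).indicator (WAux b) x ∂(muS n) =
      ∫⁻ x, WAux b x * E.indicator (1 : Euc (n + 1) → ℝ≥0∞) (phiMap b x) ∂(muS n) := by
    apply lintegral_congr
    intro x
    by_cases hx : phiMap b x ∈ E <;> simp [Set.indicator, hx]
  have e2 : muS n E = ∫⁻ x, E.indicator (1 : Euc (n + 1) → ℝ≥0∞) x ∂(muS n) :=
    (lintegral_indicator_one hE).symm
  rw [e1, e2]
  apply le_antisymm
  · have := lintegral_comp_le hb0 hb1
      (g := fun x => WAux b (phiMap b x) * E.indicator (1 : Euc (n + 1) → ℝ≥0∞) x)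
      ((hW.comp hφ).mul hi)
    calc _ = ∫⁻ x, WAux b (phiMap b (phiMap b x)) *
          E.indicator (1 : Euc (n + 1) → ℝ≥0∞) (phiMap b x) ∂(muS n) := by
          apply lintegral_congr_ae
          filter_upwards [ae_norm_one] with x hx
          rw [phiMap_phiMap hb0 hb1 hx]
      _ ≤ _ := this
      _ = _ := by
          apply lintegral_congr_ae
          filter_upwards [ae_norm_one] with x hx
          have hw := wAux_pos hb1 hx
          rw [← mul_assoc, WAux, WAux, wAux_phiMap hb0 hb1 hx,
            ← ENNReal.ofReal_mul (by positivity), ← mul_pow, mul_inv_cancel₀ hw.ne']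
          simp
  · have := lintegral_comp_le hb0 hb1
      (g := fun x => E.indicator (1 : Euc (n + 1) → ℝ≥0∞) (phiMap b x)) (hi.comp hφ)
    refine le_trans (le_of_eq ?_) this
    apply lintegral_congr_ae
    filter_upwards [ae_norm_one] with x hx
    rw [phiMap_phiMap hb0 hb1 hx]

end Helpers


/-- The change-of-variable formula (Lemma 2.1 of Agranovsky–Rubin):
for `0 < |b| < 1` and `f` integrable on `S^n`,
`∫_{S^n} f(x) dH^n(x) = (1 − |b|²)^{n/2} ∫_{S^n} f(φ_b y)/(1 − b·y)^n dH^n(y)`. -/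
theorem statement19 (n : ℕ) (hn : 1 ≤ n)
    (b : Euc (n + 1)) (hb0 : 0 < ‖b‖) (hb1 : ‖b‖ < 1)
    (f : Euc (n + 1) → ℝ)
    (hf : IntegrableOn f (sphere (0 : Euc (n + 1)) 1) μH[(n : ℝ)]) :
    (∫ x in sphere (0 : Euc (n + 1)) 1, f x ∂μH[(n : ℝ)]) =
      (1 - ‖b‖ ^ 2) ^ ((n : ℝ) / 2) *
        ∫ y in sphere (0 : Euc (n + 1)) 1,
          f (phiMap b y) / (1 - ⟪b, y⟫_ℝ) ^ n ∂μH[(n : ℝ)] := by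
  have hmap := muS_eq_map hb0 hb1
  have hf' : AEStronglyMeasurable f (((muS n).withDensity (WAux b)).map (phiMap b)) := by
    rw [hmap]; exact hf.aestronglyMeasurable
  change ∫ x, f x ∂(muS n) = _ * ∫ y, _ ∂(muS n)
  conv_lhs => rw [← hmap]
  rw [integral_map (measurable_phiMap b).aemeasurable hf',
    integral_withDensity_eq_integral_toReal_smul (measurable_WAux b)
      (Filter.Eventually.of_forall fun x => ENNReal.ofReal_lt_top), ← integral_const_mul]
  apply integral_congr_ae
  filter_upwards [ae_norm_one] with x hx
  have hw := wAux_pos hb1 hx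
  have hp : (1 - ‖b‖ ^ 2) ^ ((n : ℝ) / 2) = sAux b ^ n := by
    have h0 : 0 ≤ 1 - ‖b‖ ^ 2 := by nlinarith [norm_nonneg b]
    rw [sAux, Real.sqrt_eq_rpow, ← Real.rpow_natCast (_ ^ ((1 : ℝ) / 2)) n, ← Real.rpow_mul h0]
    congr 1
    ring
  rw [hp, WAux, ENNReal.toReal_ofReal (by positivity), wAux, div_pow, real_inner_comm, smul_eq_mul]
  ring
end
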